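/- Let k be a field, g a Lie algebra over k, and V a 1-dimensional k-vector space with basis {x}. (1) If an extending datum (◁, ▷, f, {−,−}) of g through V satisfies the Lie extending structure axioms, then necessarily f = 0 and {−,−} = 0, and there is a unique pair of linear maps λ : g → k, D : g → g with x ◁ g = λ(g)·x and x ▷ g = D(g) for all g ∈ g. (2) Conversely, for linear maps λ : g → k and D : g → g, the extending datum defined by x ◁ g := λ(g)·x, x ▷ g := D(g), f := 0, {−,−} := 0 is a Lie extending structure of g through V if and only if (λ, D) is a twisted derivation of g. Hence the Lie extending structures of g through V are in bijection with the twisted derivations of g. -/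

import Mathlib

def IsLieBracket {L : Type*} [AddCommGroup L] (B : L → L → L) : Prop :=
  (∀ p, B p p = 0) ∧ ∀ p q r, B p (B q r) + B q (B r p) + B r (B p q) = 0

def unifiedBracket {k G V : Type*} [Field k] [LieRing G] [LieAlgebra k G]
    [AddCommGroup V] [Module k V]
    (tl : V →ₗ[k] G →ₗ[k] V) (tr : V →ₗ[k] G →ₗ[k] G)
    (f : V →ₗ[k] V →ₗ[k] G) (br : V →ₗ[k] V →ₗ[k] V) :
    G × V → G × V → G × V :=
  fun p q =>
    (⁅p.1, q.1⁆ + tr p.2 q.1 - tr q.2 p.1 + f p.2 q.2,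
     br p.2 q.2 + tl p.2 q.1 - tl q.2 p.1)

/-!
The self-bracket of `(g, v)` is `(f v v, {v, v})`, so a Lie extending structure has alternating `f`
and `{-, -}`, and an alternating bilinear map on a line vanishes. With `f = 0` and `{-, -} = 0`, the
cyclic sum in the Jacobi identity at `(g, a • x)`, `(h, b • x)`, `(l, c • x)` is the cyclic sum of
`c` times the failure of `(λ, D)` to be a twisted derivation at `(g, h)`; the choice `a = b = 0`,
`c = 1` isolates a single failure.
-/

section Line

variable {R M N : Type*} [CommSemiring R] [AddCommMonoid M] [Module R M]
  [AddCommMonoid N] [Module R N]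

lemma eq_zero_of_isAlt_of_span_singleton_eq_top {B : M →ₗ[R] M →ₗ[R] N} (hB : B.IsAlt) {x : M}
    (hx : Submodule.span R {x} = ⊤) : B = 0 := by
  refine LinearMap.ext_on hx fun y hy => LinearMap.ext_on hx fun z hz => ?_
  obtain rfl : y = x := hy
  obtain rfl : z = y := hz
  exact hB z

lemma existsUnique_linearMap_apply_eq_smul {ι : Type*} [Unique ι] (b : Module.Basis ι R M)
    (φ : N →ₗ[R] M) : ∃! lam : N →ₗ[R] R, ∀ n, φ n = lam n • b default := by
  refine ⟨b.coord default ∘ₗ φ, fun n => ?_, fun lam hlam => ?_⟩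
  · simpa using (b.sum_repr (φ n)).symm
  · ext n
    simp [hlam n]

end Line

section TwistedDerivation

variable {k G : Type*} [CommRing k] [LieRing G] [LieAlgebra k G]

/-- `(lam, D)` is a twisted derivation of `G`: a character of `G` together with a map satisfying the
Leibniz rule twisted by that character. -/
def IsTwistedDerivation (lam : G →ₗ[k] k) (D : G →ₗ[k] G) : Prop :=
  (∀ g h : G, lam ⁅g, h⁆ = 0) ∧
    ∀ g h : G, D ⁅g, h⁆ = ⁅D g, h⁆ + ⁅g, D h⁆ + lam g • D h - lam h • D g

/-- The failure of the twisted Leibniz rule for `(lam, D)` at `(g, h)`; it measures the failure of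
the Jacobi identity in the `G`-component of the unified product. -/
def twistedLeibnizDefect (lam : G →ₗ[k] k) (D : G →ₗ[k] G) (g h : G) : G :=
  D ⁅g, h⁆ - (⁅D g, h⁆ + ⁅g, D h⁆ + lam g • D h - lam h • D g)

lemma isTwistedDerivation_iff_twistedLeibnizDefect_eq_zero {lam : G →ₗ[k] k} {D : G →ₗ[k] G} :
    IsTwistedDerivation lam D ↔
      ∀ g h : G, twistedLeibnizDefect lam D g h = 0 ∧ lam ⁅g, h⁆ = 0 := by
  simp only [IsTwistedDerivation, twistedLeibnizDefect, sub_eq_zero, forall_and, and_comm]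

end TwistedDerivation

section UnifiedBracket

variable {k G V : Type*} [Field k] [LieRing G] [LieAlgebra k G] [AddCommGroup V] [Module k V]
  {tl : V →ₗ[k] G →ₗ[k] V} {tr : V →ₗ[k] G →ₗ[k] G}

lemma unifiedBracket_self_eq_zero_iff {f : V →ₗ[k] V →ₗ[k] G} {br : V →ₗ[k] V →ₗ[k] V} :
    (∀ p, unifiedBracket tl tr f br p p = 0) ↔ f.IsAlt ∧ br.IsAlt := by
  simp [unifiedBracket, LinearMap.IsAlt, forall_and]

variable {lam : G →ₗ[k] k} {D : G →ₗ[k] G} {x : V}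

lemma unifiedBracket_zero_zero_smul (htl : ∀ g, tl x g = lam g • x) (htr : ∀ g, tr x g = D g)
    (g h : G) (a b : k) :
    unifiedBracket tl tr 0 0 (g, a • x) (h, b • x) =
      (⁅g, h⁆ + a • D h - b • D g, (a * lam h - b * lam g) • x) := by
  simp [unifiedBracket, htl, htr, sub_smul, mul_smul]

lemma unifiedBracket_zero_zero_jacobi_sum (htl : ∀ g, tl x g = lam g • x)
    (htr : ∀ g, tr x g = D g) (g h l : G) (a b c : k) :
    unifiedBracket tl tr 0 0 (g, a • x) (unifiedBracket tl tr 0 0 (h, b • x) (l, c • x)) +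
      unifiedBracket tl tr 0 0 (h, b • x) (unifiedBracket tl tr 0 0 (l, c • x) (g, a • x)) +
      unifiedBracket tl tr 0 0 (l, c • x) (unifiedBracket tl tr 0 0 (g, a • x) (h, b • x)) =
    (a • twistedLeibnizDefect lam D h l + b • twistedLeibnizDefect lam D l g +
        c • twistedLeibnizDefect lam D g h,
      (a * lam ⁅h, l⁆ + b * lam ⁅l, g⁆ + c * lam ⁅g, h⁆) • x) := by
  simp only [unifiedBracket_zero_zero_smul htl htr, Prod.mk_add_mk, ← add_smul]
  refine congrArg₂ Prod.mk ?_ (congrArg (· • x) ?_)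
  · simp only [twistedLeibnizDefect, map_add, map_sub, map_smul, lie_add, lie_sub, lie_smul]
    rw [← lie_skew (D g) h, ← lie_skew (D h) l, ← lie_skew (D l) g]
    linear_combination (norm := module) lie_jacobi g h l
  · simp only [map_add, map_sub, map_smul, smul_eq_mul]
    ring

lemma isLieBracket_unifiedBracket_zero_zero_iff (hx0 : x ≠ 0) (hx : Submodule.span k {x} = ⊤)
    (htl : ∀ g, tl x g = lam g • x) (htr : ∀ g, tr x g = D g) :
    IsLieBracket (unifiedBracket tl tr 0 0) ↔ IsTwistedDerivation lam D := by
  rw [isTwistedDerivation_iff_twistedLeibnizDefect_eq_zero]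
  constructor
  · intro hL g h
    have hjacobi := hL.2 (g, (0 : k) • x) (h, (0 : k) • x) (0, (1 : k) • x)
    rw [unifiedBracket_zero_zero_jacobi_sum htl htr] at hjacobi
    simpa [hx0] using hjacobi
  · intro hD
    refine ⟨unifiedBracket_self_eq_zero_iff.2 ⟨fun _ => rfl, fun _ => rfl⟩, ?_⟩
    have hmul := Submodule.span_singleton_eq_top_iff k x |>.1 hx
    rintro ⟨g, u⟩ ⟨h, v⟩ ⟨l, w⟩
    obtain ⟨a, rfl⟩ := hmul u
    obtain ⟨b, rfl⟩ := hmul v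
    obtain ⟨c, rfl⟩ := hmul w
    simp [unifiedBracket_zero_zero_jacobi_sum htl htr, hD]

end UnifiedBracket

/-- Proposition 4.4: for a 1-dimensional space `V` with basis `{x}`, Lie extending
structures of `G` through `V` are in bijection with twisted derivations `(λ, D)`;
the cocycle and the bracket of `V` are necessarily trivial, the two actions are
given by `x ◁ g = λ(g)·x` and `x ▷ g = D(g)`. -/
theorem lieExtendingStructure_dim_one {k G V : Type*} [Field k] [LieRing G]
    [LieAlgebra k G] [AddCommGroup V] [Module k V]
    (b : Module.Basis (Fin 1) k V) (x : V) (hx : x = b 0) :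
    (∀ (tl : V →ₗ[k] G →ₗ[k] V) (tr : V →ₗ[k] G →ₗ[k] G)
        (f : V →ₗ[k] V →ₗ[k] G) (br : V →ₗ[k] V →ₗ[k] V),
        IsLieBracket (unifiedBracket tl tr f br) →
        f = 0 ∧ br = 0 ∧
          ∃! lD : (G →ₗ[k] k) × (G →ₗ[k] G),
            ∀ g : G, tl x g = lD.1 g • x ∧ tr x g = lD.2 g) ∧
    (∀ (lam : G →ₗ[k] k) (D : G →ₗ[k] G)
        (tl : V →ₗ[k] G →ₗ[k] V) (tr : V →ₗ[k] G →ₗ[k] G),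
        (∀ g : G, tl x g = lam g • x) → (∀ g : G, tr x g = D g) →
        (IsLieBracket (unifiedBracket tl tr 0 0) ↔
          ((∀ g h : G, lam ⁅g, h⁆ = 0) ∧
            ∀ g h : G, D ⁅g, h⁆ = ⁅D g, h⁆ + ⁅g, D h⁆ + lam g • D h - lam h • D g))) := by
  have hx0 : x ≠ 0 := hx ▸ b.ne_zero 0
  have hspan : Submodule.span k {x} = ⊤ := by
    rw [← b.span_eq, Set.range_unique, hx, Fin.default_eq_zero]
  refine ⟨fun tl tr f br hL => ?_, fun lam D tl tr htl htr =>
    isLieBracket_unifiedBracket_zero_zero_iff hx0 hspan htl htr⟩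
  obtain ⟨hf, hbr⟩ := unifiedBracket_self_eq_zero_iff.1 hL.1
  obtain ⟨lam, hlam, hlam_unique⟩ := existsUnique_linearMap_apply_eq_smul b (tl x)
  subst hx
  exact ⟨eq_zero_of_isAlt_of_span_singleton_eq_top hf hspan,
    eq_zero_of_isAlt_of_span_singleton_eq_top hbr hspan,
    (lam, tr (b 0)), fun g => ⟨hlam g, rfl⟩, fun lD hlD =>
      Prod.ext (hlam_unique lD.1 fun g => (hlD g).1) (LinearMap.ext fun g => (hlD g).2.symm)⟩
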